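/- arXiv:1307.1013 — 4 statements merged into one kernel-verified Lean document; each statement's English description precedes it below -/
import Mathlib

section
/- For every odd integer v ≥ 5, there exists a bipartite almost planar simple graph on v vertices with exactly 3v − 9 edges; moreover there exists a bipartite almost planar simple graph on 6 vertices with exactly 9 edges. -/
/-!
One family of graphs serves for all cases. Put the vertex `i` on the `(i % 4)`-th half axis of the
plane (counted anticlockwise) at distance `i / 4 + 1` from the origin, so that the vertices form
nested squares, and join two vertices by a straight segment when their indices have opposite
parity and their squares are equal or consecutive. The parity is a proper 2-colouring, and the
graph `layered n` is the restriction to the indices below `n`.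

Every edge joins two neighbouring half axes, hence lies in one closed quadrant and meets the axes
only in its endpoints. Inside a quadrant, segments cutting the half axes at levels `(a, b)` and
`(c, d)` cross exactly when `(a - c) * (b - d) < 0`; as `|a - b| ≤ 1` and `|c - d| ≤ 1`, this
forces `(c, d) = (b, a)`. So each edge crosses at most one other (`Drawing` fields and
1-planarity follow from `eq_of_quadPt_eq` and `level_swap`).

Each vertex `4 * k + 4 + r` has 2, 3, 3, 4 smaller neighbours for `r = 0, 1, 2, 3`, while the
innermost square has 4 edges; summing gives `3 * n - 9` edges for odd `n ≥ 5` and for `n = 6`.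
-/

open Set

/-- A drawing of a simple graph `G` in the plane: an injective placement of vertices
together with, for each edge, a continuous injective curve between the points of its
endpoints, whose interior avoids all vertex points; any two distinct edge curves meet in
finitely many points, and no point lies in the interiors of three distinct edge curves. -/
structure Drawing {V : Type*} (G : SimpleGraph V) where
  pos : V → ℝ × ℝ
  pos_inj : Function.Injective pos
  curve : G.edgeSet → ℝ → ℝ × ℝ
  curve_cont : ∀ e, ContinuousOn (curve e) (Icc 0 1)
  curve_inj : ∀ e, InjOn (curve e) (Icc 0 1)
  curve_ends : ∀ e : G.edgeSet, ∃ a b : V, (e : Sym2 V) = s(a, b) ∧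
      curve e 0 = pos a ∧ curve e 1 = pos b
  interior_no_vertex : ∀ e, ∀ t ∈ Ioo (0 : ℝ) 1, ∀ v, curve e t ≠ pos v
  finite_meet : ∀ e f, e ≠ f → (curve e '' Icc 0 1 ∩ curve f '' Icc 0 1).Finite
  no_triple_point : ∀ p : ℝ × ℝ, ∀ e f g, e ≠ f → e ≠ g → f ≠ g →
      p ∈ curve e '' Ioo 0 1 → p ∈ curve f '' Ioo 0 1 → p ∈ curve g '' Ioo 0 1 → False

/-- Two edges cross in a drawing if some point lies in the interiors of both curves. -/
def Drawing.Crosses {V : Type*} {G : SimpleGraph V} (D : Drawing G) (e f : G.edgeSet) : Prop :=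
  e ≠ f ∧ ∃ p : ℝ × ℝ, p ∈ D.curve e '' Ioo 0 1 ∧ p ∈ D.curve f '' Ioo 0 1

/-- A drawing is almost planar (1-planar) if every edge crosses at most one other edge. -/
def Drawing.IsAlmostPlanar {V : Type*} {G : SimpleGraph V} (D : Drawing G) : Prop :=
  ∀ e f g, D.Crosses e f → D.Crosses e g → f = g

/-- A graph is almost planar if it admits a drawing in which every edge crosses at most
one other edge. -/
def SimpleGraph.AlmostPlanar {V : Type*} (G : SimpleGraph V) : Prop :=
  ∃ D : Drawing G, D.IsAlmostPlanar

/-! ### The graph -/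

/-- Adjacency of indices: opposite parity, and equal or consecutive squares. -/
def layAdj (i j : ℕ) : Prop :=
  i % 2 ≠ j % 2 ∧ i / 4 ≤ j / 4 + 1 ∧ j / 4 ≤ i / 4 + 1

instance (i j : ℕ) : Decidable (layAdj i j) := by unfold layAdj; infer_instance

/-- The nested squares graph on `n` vertices: the four vertices of square `k` have the indices
`4 * k, …, 4 * k + 3`, and the outermost square may be incomplete. -/
def layered (n : ℕ) : SimpleGraph (Fin n) where
  Adj i j := layAdj i j
  symm := ⟨fun i j h => by unfold layAdj at *; omega⟩
  loopless := ⟨fun i h => h.1 rfl⟩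

theorem layered_colorable (n : ℕ) : (layered n).Colorable 2 := by
  refine ⟨SimpleGraph.Coloring.mk (fun i => ⟨(i : ℕ) % 2, Nat.mod_lt _ two_pos⟩) ?_⟩
  intro i j h hcol
  exact h.1 (by simpa using hcol)

/-! ### The drawing -/

/-- The point `(x, y)` rotated anticlockwise by `q` right angles, for `q < 4`. -/
def quadPt (q : ℕ) (x y : ℝ) : ℝ × ℝ :=
  if q = 0 then (x, y) else if q = 1 then (-y, x) else if q = 2 then (-x, -y) else (y, -x)

/-- An interior point of a quadrant determines the quadrant and its coordinates there. -/
theorem eq_of_quadPt_eq {q q' : ℕ} {x y x' y' : ℝ} (hq : q < 4) (hq' : q' < 4)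
    (hx : 0 < x) (hy : 0 < y) (hx' : 0 ≤ x') (hy' : 0 ≤ y')
    (h : quadPt q x y = quadPt q' x' y') : q = q' ∧ x = x' ∧ y = y' := by
  interval_cases q <;> interval_cases q' <;> simp [quadPt] at h ⊢ <;>
    first
      | (constructor <;> linarith [h.1, h.2])
      | linarith [h.1, h.2]

theorem eq_of_quadPt_axis_eq {q q' : ℕ} {x x' : ℝ} (hq : q < 4) (hq' : q' < 4)
    (hx : 0 < x) (hx' : 0 < x') (h : quadPt q x 0 = quadPt q' x' 0) : q = q' ∧ x = x' := by
  interval_cases q <;> interval_cases q' <;> simp [quadPt] at h ⊢ <;>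
    linarith

theorem quadPt_next {q q' : ℕ} (hq : q < 4) (hq' : q' = (q + 1) % 4) (y : ℝ) :
    quadPt q 0 y = quadPt q' y 0 := by
  subst hq'
  interval_cases q <;> simp [quadPt]

theorem continuous_quadPt (q : ℕ) {f g : ℝ → ℝ} (hf : Continuous f) (hg : Continuous g) :
    Continuous fun t => quadPt q (f t) (g t) := by
  unfold quadPt
  split_ifs <;> fun_prop

/-- If two segments cutting the half axes at heights `(a + 1, b + 1)` and `(c + 1, d + 1)`, with
levels differing by at most one in each pair, have a common interior point, then they agree or
the levels are swapped. -/
theorem level_swap {a b c d : ℕ} (h₁ : a ≤ b + 1) (h₂ : b ≤ a + 1) (h₃ : c ≤ d + 1)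
    (h₄ : d ≤ c + 1) {t u : ℝ} (ht : t ∈ Ioo (0 : ℝ) 1) (hu : u ∈ Ioo (0 : ℝ) 1)
    (hx : (1 - t) * ((a : ℝ) + 1) = (1 - u) * ((c : ℝ) + 1))
    (hy : t * ((b : ℝ) + 1) = u * ((d : ℝ) + 1)) : (c = a ∧ d = b) ∨ (c = b ∧ d = a) := by
  obtain ⟨t0, t1⟩ := ht
  obtain ⟨u0, u1⟩ := hu
  -- The second segment cannot lie weakly on one side of the first without being equal to it.
  have key : ∀ {a b c d : ℕ} {t u : ℝ}, 0 < t → t < 1 → 0 < u → u < 1 →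
      (1 - t) * ((a : ℝ) + 1) = (1 - u) * ((c : ℝ) + 1) →
      t * ((b : ℝ) + 1) = u * ((d : ℝ) + 1) → a ≤ c → b ≤ d → c = a ∧ d = b := by
    intro a b c d t u t0 t1 u0 u1 hx hy hac hbd
    have hac' : (a : ℝ) ≤ c := by exact_mod_cast hac
    have hbd' : (b : ℝ) ≤ d := by exact_mod_cast hbd
    have ha : (0 : ℝ) ≤ a := a.cast_nonneg
    have hb : (0 : ℝ) ≤ b := b.cast_nonneg
    have e1 : u ≤ t := by
      by_contra hlt
      nlinarith [mul_lt_mul_of_pos_right (not_le.1 hlt) (by linarith : (0 : ℝ) < b + 1)]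
    have e2 : t ≤ u := by
      by_contra hlt
      nlinarith [mul_lt_mul_of_pos_right (not_le.1 hlt) (by linarith : (0 : ℝ) < a + 1)]
    obtain rfl : t = u := le_antisymm e2 e1
    have e3 := mul_left_cancel₀ (by linarith : (1 - t) ≠ 0) hx
    have e4 := mul_left_cancel₀ t0.ne' hy
    constructor
    · exact_mod_cast (by linarith : (c : ℝ) = a)
    · exact_mod_cast (by linarith : (d : ℝ) = b)
  rcases le_total a c with hac | hac <;> rcases le_total b d with hbd | hbd
  · exact Or.inl (key t0 t1 u0 u1 hx hy hac hbd)
  · by_cases hne : a = c ∨ b = d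
    · rcases hne with rfl | rfl
      · have := key u0 u1 t0 t1 hx.symm hy.symm le_rfl hbd
        omega
      · exact Or.inl (key t0 t1 u0 u1 hx hy hac le_rfl)
    · omega
  · by_cases hne : a = c ∨ b = d
    · rcases hne with rfl | rfl
      · exact Or.inl (key t0 t1 u0 u1 hx hy le_rfl hbd)
      · have := key u0 u1 t0 t1 hx.symm hy.symm hac le_rfl
        omega
    · omega
  · have := key u0 u1 t0 t1 hx.symm hy.symm hac hbd
    omega

/-- Every edge can be oriented anticlockwise, from its half axis to the next one. -/
theorem exists_orient {n : ℕ} (e : (layered n).edgeSet) :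
    ∃ p : Fin n × Fin n, (e : Sym2 (Fin n)) = s(p.1, p.2) ∧
      (p.2 : ℕ) % 4 = ((p.1 : ℕ) % 4 + 1) % 4 ∧
      (p.1 : ℕ) / 4 ≤ (p.2 : ℕ) / 4 + 1 ∧ (p.2 : ℕ) / 4 ≤ (p.1 : ℕ) / 4 + 1 := by
  obtain ⟨e, he⟩ := e
  induction e using Sym2.ind with
  | _ i j =>
    have h : layAdj i j := he
    obtain ⟨h1, h2, h3⟩ := h
    by_cases hc : (j : ℕ) % 4 = ((i : ℕ) % 4 + 1) % 4
    · exact ⟨(i, j), rfl, hc, h2, h3⟩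
    · exact ⟨(j, i), Sym2.eq_swap, by dsimp only; omega, h3, h2⟩

theorem layered_almostPlanar (n : ℕ) : (layered n).AlmostPlanar := by
  choose p hp hq hl hr using @exists_orient n
  set pos : Fin n → ℝ × ℝ := fun i => quadPt ((i : ℕ) % 4) (((i : ℕ) / 4 : ℕ) + 1) 0 with hpos
  set curve : (layered n).edgeSet → ℝ → ℝ × ℝ := fun e t =>
    quadPt (((p e).1 : ℕ) % 4) ((1 - t) * ((((p e).1 : ℕ) / 4 : ℕ) + 1))
      (t * ((((p e).2 : ℕ) / 4 : ℕ) + 1)) with hcurve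
  have lt4 : ∀ m : ℕ, m % 4 < 4 := fun m => Nat.mod_lt _ (by norm_num)
  have hP : ∀ m : ℕ, (0 : ℝ) < (m : ℝ) + 1 := fun m => by positivity
  -- An interior point of one edge lying on another one has equal quadrant coordinates there.
  have meet : ∀ e f, ∀ t ∈ Ioo (0 : ℝ) 1, ∀ u ∈ Icc (0 : ℝ) 1, curve e t = curve f u →
      ((p e).1 : ℕ) % 4 = ((p f).1 : ℕ) % 4 ∧
      (1 - t) * (((((p e).1 : ℕ) / 4 : ℕ) : ℝ) + 1)
        = (1 - u) * (((((p f).1 : ℕ) / 4 : ℕ) : ℝ) + 1) ∧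
      t * (((((p e).2 : ℕ) / 4 : ℕ) : ℝ) + 1) = u * (((((p f).2 : ℕ) / 4 : ℕ) : ℝ) + 1) := by
    intro e f t ht u hu h
    exact eq_of_quadPt_eq (lt4 _) (lt4 _) (mul_pos (by linarith [ht.2]) (hP _))
      (mul_pos ht.1 (hP _)) (mul_nonneg (by linarith [hu.2]) (hP _).le)
      (mul_nonneg hu.1 (hP _).le) h
  have edge_ext : ∀ e f, ((p e).1 : ℕ) % 4 = ((p f).1 : ℕ) % 4 →
      ((p e).1 : ℕ) / 4 = ((p f).1 : ℕ) / 4 → ((p e).2 : ℕ) / 4 = ((p f).2 : ℕ) / 4 → e = f := by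
    intro e f h1 h2 h3
    have h4 := hq e
    have h5 := hq f
    apply Subtype.ext
    rw [hp e, hp f, show (p e).1 = (p f).1 from Fin.ext (by omega),
      show (p e).2 = (p f).2 from Fin.ext (by omega)]
  have cross : ∀ e f, e ≠ f → ∀ x, x ∈ curve e '' Ioo 0 1 → x ∈ curve f '' Ioo 0 1 →
      ((p f).1 : ℕ) % 4 = ((p e).1 : ℕ) % 4 ∧ ((p f).1 : ℕ) / 4 = ((p e).2 : ℕ) / 4 ∧
      ((p f).2 : ℕ) / 4 = ((p e).1 : ℕ) / 4 := by
    rintro e f hne x ⟨t, ht, rfl⟩ ⟨u, hu, hx⟩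
    obtain ⟨h1, h2, h3⟩ := meet e f t ht u (Ioo_subset_Icc_self hu) hx.symm
    rcases level_swap (hl e) (hr e) (hl f) (hr f) ht hu h2 h3 with h | h
    · exact absurd (edge_ext e f h1 h.1.symm h.2.symm) hne
    · exact ⟨h1.symm, h⟩
  have unique : ∀ e f g, e ≠ f → e ≠ g →
      (∃ x, x ∈ curve e '' Ioo 0 1 ∧ x ∈ curve f '' Ioo 0 1) →
      (∃ x, x ∈ curve e '' Ioo 0 1 ∧ x ∈ curve g '' Ioo 0 1) → f = g := by
    rintro e f g hef heg ⟨x, hx, hx'⟩ ⟨y, hy, hy'⟩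
    obtain ⟨h1, h2, h3⟩ := cross e f hef x hx hx'
    obtain ⟨h4, h5, h6⟩ := cross e g heg y hy hy'
    exact edge_ext f g (h1.trans h4.symm) (h2.trans h5.symm) (h3.trans h6.symm)
  have ends0 : ∀ e, curve e 0 = pos (p e).1 := fun e => by simp [hcurve, hpos]
  have ends1 : ∀ e, curve e 1 = pos (p e).2 := fun e => by
    simp only [hcurve, hpos, sub_self, zero_mul, one_mul]
    exact quadPt_next (lt4 _) (hq e) _
  have no_vertex : ∀ e, ∀ t ∈ Ioo (0 : ℝ) 1, ∀ v, curve e t ≠ pos v := by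
    intro e t ht v h
    have h' := (eq_of_quadPt_eq (lt4 _) (lt4 _) (mul_pos (by linarith [ht.2]) (hP _))
      (mul_pos ht.1 (hP _)) (hP _).le le_rfl h).2.2
    exact (mul_pos ht.1 (hP _)).ne' h'
  have pos_inj : Function.Injective pos := by
    intro i j h
    obtain ⟨h1, h2⟩ := eq_of_quadPt_axis_eq (lt4 _) (lt4 _) (hP _) (hP _) h
    have h3 : (i : ℕ) / 4 = (j : ℕ) / 4 := by
      exact_mod_cast add_right_cancel h2
    exact Fin.ext (by omega)
  have ends_ne : ∀ e, pos (p e).1 ≠ pos (p e).2 := fun e h => by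
    have h1 := hq e
    have h2 := congrArg Fin.val (pos_inj h)
    omega
  have split01 : ∀ t ∈ Icc (0 : ℝ) 1, t = 0 ∨ t = 1 ∨ t ∈ Ioo (0 : ℝ) 1 := by
    intro t ht
    rcases ht.1.eq_or_lt with h | h
    · exact Or.inl h.symm
    · rcases ht.2.eq_or_lt with h' | h'
      · exact Or.inr (Or.inl h')
      · exact Or.inr (Or.inr ⟨h, h'⟩)
  refine ⟨⟨pos, pos_inj, curve, ?_, ?_, ?_, no_vertex, ?_, ?_⟩, ?_⟩
  · intro e
    exact (continuous_quadPt _ (by fun_prop) (by fun_prop)).continuousOn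
  · intro e t ht u hu h
    have main : ∀ t ∈ Ioo (0 : ℝ) 1, ∀ u ∈ Icc (0 : ℝ) 1, curve e t = curve e u → t = u :=
      fun t ht u hu h => mul_right_cancel₀ (hP _).ne' (meet e e t ht u hu h).2.2
    rcases split01 t ht with rfl | rfl | ht'
    · rcases split01 u hu with rfl | rfl | hu'
      · rfl
      · rw [ends0, ends1] at h
        exact absurd h (ends_ne e)
      · exact (main u hu' 0 ht h.symm).symm
    · rcases split01 u hu with rfl | rfl | hu'
      · rw [ends0, ends1] at h
        exact absurd h.symm (ends_ne e)
      · rfl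
      · exact (main u hu' 1 ht h.symm).symm
    · exact main t ht' u hu h
  · exact fun e => ⟨(p e).1, (p e).2, hp e, ends0 e, ends1 e⟩
  · intro e f hne
    -- Two distinct segments meet at most in the endpoints of the first one and in the
    -- intersection point of their lines, whose parameter `T` on the first is given by Cramer's rule.
    obtain ⟨s, hs⟩ : ∃ s : ℝ, s = ((((p e).1 : ℕ) / 4 : ℕ) : ℝ) + 1 := ⟨_, rfl⟩
    obtain ⟨S, hS⟩ : ∃ S : ℝ, S = ((((p e).2 : ℕ) / 4 : ℕ) : ℝ) + 1 := ⟨_, rfl⟩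
    obtain ⟨s', hs'⟩ : ∃ s' : ℝ, s' = ((((p f).1 : ℕ) / 4 : ℕ) : ℝ) + 1 := ⟨_, rfl⟩
    obtain ⟨S', hS'⟩ : ∃ S' : ℝ, S' = ((((p f).2 : ℕ) / 4 : ℕ) : ℝ) + 1 := ⟨_, rfl⟩
    set T : ℝ := (s' - s) * S' / (S * s' - s * S') with hT
    refine Set.Finite.subset (Set.toFinite {curve e 0, curve e 1, curve e T}) ?_
    rintro x ⟨⟨t, ht, rfl⟩, ⟨u, hu, hx⟩⟩
    rcases split01 t ht with rfl | rfl | ht'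
    · simp
    · simp
    · obtain ⟨h1, h2, h3⟩ := meet e f t ht' u hu hx.symm
      rw [← hs, ← hs'] at h2
      rw [← hS, ← hS'] at h3
      have hs0 : 0 < s := hs ▸ hP _
      have hS0 : 0 < S := hS ▸ hP _
      have hs0' : 0 < s' := hs' ▸ hP _
      have hS0' : 0 < S' := hS' ▸ hP _
      have hlin : t * (S * s' - s * S') = (s' - s) * S' := by
        linear_combination S' * h2 + s' * h3
      have hdet : S * s' - s * S' ≠ 0 := by
        intro h0
        rw [h0, mul_zero] at hlin
        have hss : s' = s := by
          rcases mul_eq_zero.1 hlin.symm with h | h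
          · linarith
          · exact absurd h hS0'.ne'
        have hSS : S' = S := by
          subst hss
          have : s' * (S - S') = 0 := by linear_combination h0
          rcases mul_eq_zero.1 this with h | h
          · exact absurd h hs0.ne'
          · linarith
        refine hne (edge_ext e f h1 ?_ ?_)
        · rw [hs, hs'] at hss
          exact_mod_cast (add_right_cancel hss).symm
        · rw [hS, hS'] at hSS
          exact_mod_cast (add_right_cancel hSS).symm
      have : t = T := by rw [hT, eq_div_iff hdet, hlin]
      simp [this]
  · intro x e f g hef heg hfg he hf hg
    exact hfg (unique e f g hef heg ⟨x, he, hf⟩ ⟨x, he, hg⟩)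
  · rintro e f g ⟨hef, hf⟩ ⟨heg, hg⟩
    exact unique e f g hef heg hf hg

/-! ### Counting edges -/

theorem layered_ncard (n : ℕ) : (layered n).edgeSet.ncard =
    ∑ j ∈ Finset.range n, ((Finset.range j).filter fun i => layAdj i j).card := by
  have h1 : (layered n).edgeSet =
      (fun p : Fin n × Fin n => s(p.2, p.1)) ''
        (Finset.univ.filter fun p : Fin n × Fin n => p.2 < p.1 ∧ layAdj p.2 p.1 :
          Finset (Fin n × Fin n)) := by
    ext e
    induction e using Sym2.ind with
    | _ i j =>
      constructor
      · intro h
        have h' : layAdj i j := h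
        have hne : (i : ℕ) ≠ j := fun h0 => h'.1 (by rw [h0])
        rcases lt_or_gt_of_ne hne with hlt | hlt
        · exact ⟨(j, i), by simpa using ⟨hlt, h'⟩, rfl⟩
        · exact ⟨(i, j), by simpa using ⟨hlt, (layered n).symm.symm _ _ h⟩, Sym2.eq_swap⟩
      · rintro ⟨⟨a, b⟩, hab, h⟩
        rw [← h]
        have : b < a ∧ layAdj b a := by simpa using hab
        exact this.2
  rw [h1, Set.InjOn.ncard_image, Set.ncard_coe_finset, Finset.card_filter,
    Fintype.sum_prod_type, ← Fin.sum_univ_eq_sum_range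
      (fun j => ((Finset.range j).filter fun i => layAdj i j).card)]
  · refine Finset.sum_congr rfl fun j _ => ?_
    have h2 := Fin.sum_univ_eq_sum_range (fun i => if i < (j : ℕ) ∧ layAdj i j then 1 else 0) n
    simp only [Fin.lt_def]
    rw [h2, ← Finset.card_filter]
    congr 1
    ext i
    simp only [Finset.mem_filter, Finset.mem_range]
    have := j.isLt
    constructor
    · exact fun h => h.2
    · exact fun h => ⟨h.1.trans this, h⟩
  · rintro ⟨a, b⟩ hab ⟨c, d⟩ hcd h
    have h3 : b < a ∧ layAdj b a := by simpa using hab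
    have h4 : d < c ∧ layAdj d c := by simpa using hcd
    rcases Sym2.eq_iff.1 h with ⟨h5, h6⟩ | ⟨h5, h6⟩
    · exact Prod.ext h6 h5
    · dsimp only at h5 h6
      exact absurd (h5 ▸ h6 ▸ h3.1) h4.1.asymm

theorem back_zero (k : ℕ) :
    ((Finset.range (4 * k + 4)).filter fun i => layAdj i (4 * k + 4)).card = 2 := by
  have : ((Finset.range (4 * k + 4)).filter fun i => layAdj i (4 * k + 4))
      = {4 * k + 1, 4 * k + 3} := by
    ext i
    rw [Finset.mem_filter]
    simp only [Finset.mem_range, layAdj, Finset.mem_insert, Finset.mem_singleton]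
    omega
  rw [this]
  simp

theorem back_one (k : ℕ) :
    ((Finset.range (4 * k + 5)).filter fun i => layAdj i (4 * k + 5)).card = 3 := by
  have : ((Finset.range (4 * k + 5)).filter fun i => layAdj i (4 * k + 5))
      = {4 * k, 4 * k + 2, 4 * k + 4} := by
    ext i
    rw [Finset.mem_filter]
    simp only [Finset.mem_range, layAdj, Finset.mem_insert, Finset.mem_singleton]
    omega
  rw [this]
  simp

theorem back_two (k : ℕ) :
    ((Finset.range (4 * k + 6)).filter fun i => layAdj i (4 * k + 6)).card = 3 := by
  have : ((Finset.range (4 * k + 6)).filter fun i => layAdj i (4 * k + 6))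
      = {4 * k + 1, 4 * k + 3, 4 * k + 5} := by
    ext i
    rw [Finset.mem_filter]
    simp only [Finset.mem_range, layAdj, Finset.mem_insert, Finset.mem_singleton]
    omega
  rw [this]
  simp

theorem back_three (k : ℕ) :
    ((Finset.range (4 * k + 7)).filter fun i => layAdj i (4 * k + 7)).card = 4 := by
  have : ((Finset.range (4 * k + 7)).filter fun i => layAdj i (4 * k + 7))
      = {4 * k, 4 * k + 2, 4 * k + 4, 4 * k + 6} := by
    ext i
    rw [Finset.mem_filter]
    simp only [Finset.mem_range, layAdj, Finset.mem_insert, Finset.mem_singleton]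
    omega
  rw [this]
  simp

theorem layered_ncard_four (k : ℕ) : (layered (4 * k + 4)).edgeSet.ncard = 12 * k + 4 := by
  rw [layered_ncard]
  induction k with
  | zero => decide
  | succ k ih =>
    rw [show 4 * (k + 1) + 4 = 4 * k + 4 + 1 + 1 + 1 + 1 by ring]
    simp only [Finset.sum_range_succ _ (4 * k + 4 + 1 + 1 + 1),
      Finset.sum_range_succ _ (4 * k + 4 + 1 + 1), Finset.sum_range_succ _ (4 * k + 4 + 1),
      Finset.sum_range_succ _ (4 * k + 4), ih]
    have h0 := back_zero k
    have h1 := back_one k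
    have h2 := back_two k
    have h3 := back_three k
    simp only [add_assoc, Nat.reduceAdd] at *
    omega

theorem layered_ncard_five (k : ℕ) : (layered (4 * k + 5)).edgeSet.ncard = 12 * k + 6 := by
  rw [layered_ncard, Finset.sum_range_succ, ← layered_ncard, layered_ncard_four, back_zero]

theorem layered_ncard_six (k : ℕ) : (layered (4 * k + 6)).edgeSet.ncard = 12 * k + 9 := by
  rw [layered_ncard, Finset.sum_range_succ, ← layered_ncard, layered_ncard_five, back_one]

theorem layered_ncard_seven (k : ℕ) : (layered (4 * k + 7)).edgeSet.ncard = 12 * k + 12 := by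
  rw [layered_ncard, Finset.sum_range_succ, ← layered_ncard, layered_ncard_six, back_two]

/-- For every odd `v ≥ 5` there is a bipartite almost planar simple graph on `v` vertices
with exactly `3v - 9` edges; moreover there is a bipartite almost planar simple graph on
`6` vertices with exactly `9` edges. -/
theorem exists_extremal_bipartite_almostPlanar_odd_and_six :
    (∀ v : ℕ, 5 ≤ v → Odd v →
      ∃ G : SimpleGraph (Fin v), G.Colorable 2 ∧ G.AlmostPlanar ∧
        G.edgeSet.ncard = 3 * v - 9) ∧
    (∃ G : SimpleGraph (Fin 6), G.Colorable 2 ∧ G.AlmostPlanar ∧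
      G.edgeSet.ncard = 9) := by
  refine ⟨fun v hv hodd => ⟨layered v, layered_colorable v, layered_almostPlanar v, ?_⟩,
    layered 6, layered_colorable 6, layered_almostPlanar 6, layered_ncard_six 0⟩
  obtain ⟨m, hm⟩ := hodd
  obtain ⟨k, rfl | rfl⟩ : ∃ k, v = 4 * k + 5 ∨ v = 4 * k + 7 := ⟨(v - 5) / 4, by omega⟩
  · rw [layered_ncard_five]
    omega
  · rw [layered_ncard_seven]
    omega
end

section
/- The complete bipartite graph K_{4,4} is almost planar. -/
/-!
Place one part of `K_{4,4}` on the `x`-axis and the other on the `y`-axis, in both cases at the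
coordinates `3, -3, 1, -1`, and draw every edge as a straight segment. Each edge then lies in one
closed quadrant. Two crossing edges lie in the same quadrant and share no endpoint, and
each closed quadrant contains only two points of either part; so the only edge that can cross the edge
from `(a, 0)` to `(0, b)` is the one from `(3 / a, 0)` to `(0, 3 / b)` (`K44.cross_index`). This
settles both 1-planarity and the absence of triple points. Distinct edges lie on distinct lines
`x / a + y / b = 1`, hence meet in at most one point (`K44.meet_subsingleton`).
-/

open Set

namespace K44

/-- The coordinates of the four vertices of a part on its axis. -/
def coord : Fin 4 → ℝ := ![3, -3, 1, -1]

/-- The index of the other vertex on the same half-axis. -/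
def partner : Fin 4 → Fin 4 := ![2, 3, 0, 1]

lemma coord_ne_zero (i : Fin 4) : coord i ≠ 0 := by
  fin_cases i <;> norm_num [coord]

lemma coord_injective : Function.Injective coord := by
  intro i j h
  fin_cases i <;> fin_cases j <;> first | rfl | (norm_num [coord] at h)

lemma eq_or_eq_partner {i k : Fin 4} (h : 0 < coord i * coord k) : k = i ∨ k = partner i := by
  fin_cases i <;> fin_cases k <;> first | (left; rfl) | (right; rfl) | (norm_num [coord] at h)

/-- The vertex positions: one part on the `x`-axis, the other on the `y`-axis. -/
def position : Fin 4 ⊕ Fin 4 → ℝ × ℝ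
  | .inl i => (coord i, 0)
  | .inr j => (0, coord j)

/-- The segment from `(coord i, 0)` to `(0, coord j)`. -/
def segmentCurve (i j : Fin 4) (t : ℝ) : ℝ × ℝ := ((1 - t) * coord i, t * coord j)

lemma mul_pos_of_scaled_eq {a b s t : ℝ} (ha : a ≠ 0) (hs : 0 < s) (ht : 0 < t)
    (h : s * a = t * b) : 0 < a * b := by
  have h1 : 0 < s * (a * a) := mul_pos hs (mul_self_pos.mpr ha)
  have h2 : s * (a * a) = t * (a * b) := by linear_combination a * h
  rw [h2] at h1
  exact pos_of_mul_pos_right h1 ht.le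

/-- Two distinct segments with a common interior point share no endpoint and lie in the same
quadrant, so each determines the other. -/
lemma cross_index {i j k l : Fin 4} (hne : ¬ (k = i ∧ l = j)) {p : ℝ × ℝ}
    (h₁ : p ∈ segmentCurve i j '' Ioo 0 1) (h₂ : p ∈ segmentCurve k l '' Ioo 0 1) :
    k = partner i ∧ l = partner j := by
  obtain ⟨t, ⟨ht0, ht1⟩, rfl⟩ := h₁
  obtain ⟨s, ⟨hs0, hs1⟩, h⟩ := h₂
  simp only [segmentCurve, Prod.mk.injEq] at h
  obtain ⟨hx, hy⟩ := h
  have hik := eq_or_eq_partner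
    (mul_pos_of_scaled_eq (coord_ne_zero i) (sub_pos.2 ht1) (sub_pos.2 hs1) hx.symm)
  have hjl := eq_or_eq_partner (mul_pos_of_scaled_eq (coord_ne_zero j) ht0 hs0 hy.symm)
  -- A common endpoint forces equal parameters, hence equality of the other endpoints as well.
  have hki : k ≠ i := by
    rintro rfl
    have hst : s = t := by
      have := mul_right_cancel₀ (coord_ne_zero k) hx
      linarith
    subst hst
    exact hne ⟨rfl, coord_injective (mul_left_cancel₀ hs0.ne' hy)⟩
  have hlj : l ≠ j := by
    rintro rfl
    have hst : s = t := mul_right_cancel₀ (coord_ne_zero l) hy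
    subst hst
    exact hne ⟨coord_injective (mul_left_cancel₀ (sub_pos.2 hs1).ne' hx), rfl⟩
  exact ⟨hik.resolve_left hki, hjl.resolve_left hlj⟩

lemma segment_line (i j : Fin 4) (t : ℝ) :
    (coord i)⁻¹ * (segmentCurve i j t).1 + (coord j)⁻¹ * (segmentCurve i j t).2 = 1 := by
  have := coord_ne_zero i
  have := coord_ne_zero j
  simp only [segmentCurve]
  field_simp
  ring

lemma meet_subsingleton {i j k l : Fin 4} (hne : ¬ (k = i ∧ l = j)) :
    (segmentCurve i j '' Icc 0 1 ∩ segmentCurve k l '' Icc 0 1).Subsingleton := by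
  have key : ∀ p ∈ segmentCurve i j '' Icc 0 1 ∩ segmentCurve k l '' Icc 0 1,
      (coord i)⁻¹ * p.1 + (coord j)⁻¹ * p.2 = 1 ∧ (coord k)⁻¹ * p.1 + (coord l)⁻¹ * p.2 = 1 := by
    rintro p ⟨⟨t, -, rfl⟩, ⟨s, -, hs⟩⟩
    exact ⟨segment_line i j t, hs ▸ segment_line k l s⟩
  rintro ⟨x, y⟩ hp ⟨u, v⟩ hq
  obtain ⟨h1, h2⟩ := key _ hp
  obtain ⟨h3, h4⟩ := key _ hq
  simp only at h1 h2 h3 h4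
  -- Both points are orthogonal to the nonzero difference of the two normals, so are parallel.
  have hdet : x * v - u * y = 0 := by
    by_contra hd
    apply hne
    constructor
    · refine coord_injective (inv_injective (mul_right_cancel₀ hd ?_))
      linear_combination v * (h2 - h1) - y * (h4 - h3)
    · refine coord_injective (inv_injective (mul_right_cancel₀ hd ?_))
      linear_combination x * (h4 - h3) - u * (h2 - h1)
  ext
  · simp only
    linear_combination u * h1 - x * h3 + (coord j)⁻¹ * hdet
  · simp only
    linear_combination v * h1 - y * h3 - (coord i)⁻¹ * hdet

lemma exists_index (e : (completeBipartiteGraph (Fin 4) (Fin 4)).edgeSet) :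
    ∃ q : Fin 4 × Fin 4, (e : Sym2 (Fin 4 ⊕ Fin 4)) = s(.inl q.1, .inr q.2) := by
  obtain ⟨e, he⟩ := e
  induction e using Sym2.ind with
  | _ a b =>
    rcases a with i | i <;> rcases b with j | j <;> simp at he ⊢

end K44

open K44 in
/-- The complete bipartite graph `K_{4,4}` is almost planar. -/
theorem K44_almostPlanar :
    (completeBipartiteGraph (Fin 4) (Fin 4)).AlmostPlanar := by
  choose q hq using exists_index
  have q_ne : ∀ e f, e ≠ f → ¬ ((q f).1 = (q e).1 ∧ (q f).2 = (q e).2) := by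
    rintro e f hef ⟨h1, h2⟩
    exact hef (Subtype.ext (by rw [hq e, hq f, h1, h2]))
  have q_cross : ∀ p e f g, e ≠ f → e ≠ g → p ∈ segmentCurve (q e).1 (q e).2 '' Ioo 0 1 →
      p ∈ segmentCurve (q f).1 (q f).2 '' Ioo 0 1 →
      ∀ r, r ∈ segmentCurve (q e).1 (q e).2 '' Ioo 0 1 →
      r ∈ segmentCurve (q g).1 (q g).2 '' Ioo 0 1 → f = g := by
    intro p e f g hef heg he hf r he' hg
    obtain ⟨h1, h2⟩ := cross_index (q_ne e f hef) he hf
    obtain ⟨h3, h4⟩ := cross_index (q_ne e g heg) he' hg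
    exact Subtype.ext (by rw [hq f, hq g, h1, h2, h3, h4])
  refine ⟨{
    pos := position
    pos_inj := ?_
    curve := fun e => segmentCurve (q e).1 (q e).2
    curve_cont := ?_
    curve_inj := ?_
    curve_ends := fun e => ⟨_, _, hq e, by simp [segmentCurve, position],
      by simp [segmentCurve, position]⟩
    interior_no_vertex := ?_
    finite_meet := fun e f hef => (meet_subsingleton (q_ne e f hef)).finite
    no_triple_point := fun p e f g hef heg hfg he hf hg =>
      hfg (q_cross p e f g hef heg he hf p he hg) }, ?_⟩
  · rintro (i | i) (j | j) h <;> simp [position, coord_ne_zero, coord_injective.eq_iff] at h ⊢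
    all_goals exact h
  · intro e
    unfold segmentCurve
    fun_prop
  · intro e t _ s _ h
    exact mul_right_cancel₀ (coord_ne_zero _) (Prod.ext_iff.1 h).2
  · rintro e t ⟨ht0, ht1⟩ (v | v) h
    · exact mul_ne_zero ht0.ne' (coord_ne_zero _) (Prod.ext_iff.1 h).2
    · exact mul_ne_zero (sub_pos.2 ht1).ne' (coord_ne_zero _) (Prod.ext_iff.1 h).1
  · rintro e f g ⟨hef, p, he, hf⟩ ⟨heg, r, he', hg⟩
    exact q_cross p e f g hef heg he hf r he' hg
end

section
/- The complete bipartite graph K_{3,6} is almost planar; consequently its subgraph K_{3,5} is also almost planar. -/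
/-!
`K_{3,6}` has a straight-line drawing in which every edge crosses at most one other edge; deleting
a vertex from it gives such a drawing of `K_{3,5}`. The vertices are nine explicit lattice points,
no three of them collinear.

Everything about such a drawing is read off from the orientation determinants `orient` of triples
of vertices. General position makes edge interiors avoid the vertices and makes two distinct edges
meet in at most one point (`exists_off_line`). If the interiors of two distinct edges meet, then
the ends of each edge lie strictly on opposite sides of the line through the other
(`opposite_sides_of_meet`), an integer condition `SignCross`. Hence it suffices that no edge is in
the relation `SignCross` with two different edges (`almostPlanar_of_points`), which for the given
points is a finite computation.
-/


open Set

namespace StraightLine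

/-- Twice the signed area of the triangle `p q r`; it vanishes iff the points are collinear. -/
def orient {R : Type*} [CommRing R] (p q r : R × R) : R :=
  (q.1 - p.1) * (r.2 - p.2) - (q.2 - p.2) * (r.1 - p.1)

/-- A lattice point viewed in the real plane. -/
def toPlane (p : ℤ × ℤ) : ℝ × ℝ := ((p.1 : ℝ), (p.2 : ℝ))

/-- The affine parametrization of the segment from `A` (at `t = 0`) to `B` (at `t = 1`). -/
def seg (A B : ℝ × ℝ) (t : ℝ) : ℝ × ℝ := (A.1 + t * (B.1 - A.1), A.2 + t * (B.2 - A.2))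

lemma orient_toPlane (p q r : ℤ × ℤ) :
    orient (toPlane p) (toPlane q) (toPlane r) = ((orient p q r : ℤ) : ℝ) := by
  simp [orient, toPlane]

lemma toPlane_injective : Function.Injective toPlane := by
  intro p q h
  simpa [toPlane, Prod.ext_iff] using h

lemma orient_seg (A B C D : ℝ × ℝ) (t : ℝ) :
    orient C D (seg A B t) = (1 - t) * orient C D A + t * orient C D B := by
  simp only [orient, seg]; ring

lemma orient_seg_self (A B : ℝ × ℝ) (t : ℝ) : orient A B (seg A B t) = 0 := by
  simp only [orient, seg]; ring

lemma seg_injective {A B : ℝ × ℝ} (h : A ≠ B) : Function.Injective (seg A B) := by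
  intro s t hst
  simp only [seg, Prod.mk.injEq, add_right_inj] at hst
  by_contra hne
  apply h
  ext
  · by_contra h1
    exact hne (mul_right_cancel₀ (sub_ne_zero.2 (Ne.symm h1)) hst.1)
  · by_contra h1
    exact hne (mul_right_cancel₀ (sub_ne_zero.2 (Ne.symm h1)) hst.2)

/-- If a convex combination with positive weights of two reals, not both zero, vanishes, then their
signs are strictly opposite. -/
lemma mul_neg_of_combination {x y s : ℝ} (hs : s ∈ Ioo (0 : ℝ) 1)
    (h : (1 - s) * x + s * y = 0) (hxy : x ≠ 0 ∨ y ≠ 0) : x * y < 0 := by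
  obtain ⟨h0, h1⟩ := hs
  have hx : x ≠ 0 := by
    rintro rfl
    have : y = 0 := by simpa [h0.ne'] using h
    simp_all
  have key : s * (x * y) = -((1 - s) * x ^ 2) := by linear_combination x * h
  have hneg : s * (x * y) < 0 := by
    rw [key]
    have := mul_pos (sub_pos.2 h1) (pow_two_pos_of_ne_zero hx)
    linarith
  exact (pos_iff_neg_of_mul_neg hneg).1 h0

section Bipartite

variable {m n : ℕ}

/-- No three of the points `P v` are collinear. -/
def GeneralPosition (P : Fin m ⊕ Fin n → ℤ × ℤ) : Prop :=
  ∀ a b c, a ≠ b → a ≠ c → b ≠ c → orient (P a) (P b) (P c) ≠ 0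

/-- The edges `e = (i, j)` and `f = (k, l)` of the complete bipartite graph, drawn as segments,
strictly separate each other's ends. -/
def SignCross (P : Fin m ⊕ Fin n → ℤ × ℤ) (e f : Fin m × Fin n) : Prop :=
  orient (P (.inl e.1)) (P (.inr e.2)) (P (.inl f.1)) *
      orient (P (.inl e.1)) (P (.inr e.2)) (P (.inr f.2)) < 0 ∧
    orient (P (.inl f.1)) (P (.inr f.2)) (P (.inl e.1)) *
      orient (P (.inl f.1)) (P (.inr f.2)) (P (.inr e.2)) < 0

/-- The segment drawn for the edge `e = (i, j)`. -/
def edgeSeg (P : Fin m ⊕ Fin n → ℤ × ℤ) (e : Fin m × Fin n) : ℝ → ℝ × ℝ :=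
  seg (toPlane (P (.inl e.1))) (toPlane (P (.inr e.2)))

variable {P : Fin m ⊕ Fin n → ℤ × ℤ}

/-- An edge other than `e` has an end off the line through `e`: by general position an end on that
line is an end of `e`, and bipartiteness forces the two ends to match. -/
lemma exists_off_line (hP : GeneralPosition P) {e f : Fin m × Fin n} (hef : e ≠ f) :
    orient (P (.inl e.1)) (P (.inr e.2)) (P (.inl f.1)) ≠ 0 ∨
      orient (P (.inl e.1)) (P (.inr e.2)) (P (.inr f.2)) ≠ 0 := by
  by_cases h1 : e.1 = f.1
  · right
    have h2 : e.2 ≠ f.2 := fun h2 => hef (Prod.ext h1 h2)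
    exact hP _ _ _ (by simp) (by simp) (by simpa using h2)
  · left
    exact hP _ _ _ (by simp) (by simpa using h1) (by simp)

lemma opposite_sides_of_meet (hP : GeneralPosition P) {e f : Fin m × Fin n} (hef : e ≠ f)
    {s t : ℝ} (hs : s ∈ Ioo (0 : ℝ) 1) (h : edgeSeg P e t = edgeSeg P f s) :
    orient (P (.inl e.1)) (P (.inr e.2)) (P (.inl f.1)) *
      orient (P (.inl e.1)) (P (.inr e.2)) (P (.inr f.2)) < 0 := by
  have h0 := orient_seg_self (toPlane (P (.inl e.1))) (toPlane (P (.inr e.2))) t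
  unfold edgeSeg at h
  rw [h, orient_seg, orient_toPlane, orient_toPlane] at h0
  have := mul_neg_of_combination hs h0 (by exact_mod_cast exists_off_line hP hef)
  exact_mod_cast this

lemma signCross_of_meet (hP : GeneralPosition P) {e f : Fin m × Fin n} (hef : e ≠ f)
    {p : ℝ × ℝ} (he : p ∈ edgeSeg P e '' Ioo 0 1) (hf : p ∈ edgeSeg P f '' Ioo 0 1) :
    SignCross P e f := by
  obtain ⟨t, ht, rfl⟩ := he
  obtain ⟨s, hs, hst⟩ := hf
  exact ⟨opposite_sides_of_meet hP hef hs hst.symm, opposite_sides_of_meet hP hef.symm ht hst⟩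

/-- Two distinct edges have at most one common point, since one of them is not contained in the
line through the other. -/
lemma meet_subsingleton (hP : GeneralPosition P) {e f : Fin m × Fin n} (hef : e ≠ f) :
    (edgeSeg P e '' Icc 0 1 ∩ edgeSeg P f '' Icc 0 1).Subsingleton := by
  rintro _ ⟨⟨t, -, rfl⟩, ⟨s, -, hs⟩⟩ _ ⟨⟨t', -, rfl⟩, ⟨s', -, hs'⟩⟩
  have key : ∀ {u v : ℝ}, edgeSeg P f u = edgeSeg P e v →
      (1 - v) * ((orient (P (.inl f.1)) (P (.inr f.2)) (P (.inl e.1)) : ℤ) : ℝ) +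
        v * ((orient (P (.inl f.1)) (P (.inr f.2)) (P (.inr e.2)) : ℤ) : ℝ) = 0 := by
    intro u v h
    have h0 := orient_seg_self (toPlane (P (.inl f.1))) (toPlane (P (.inr f.2))) u
    unfold edgeSeg at h
    rwa [h, orient_seg, orient_toPlane, orient_toPlane] at h0
  have h := key hs
  have h' := key hs'
  have hoff := exists_off_line hP hef.symm
  rw [← Int.cast_ne_zero (α := ℝ), ← Int.cast_ne_zero (α := ℝ)] at hoff
  set x : ℝ := ((orient (P (.inl f.1)) (P (.inr f.2)) (P (.inl e.1)) : ℤ) : ℝ)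
  set y : ℝ := ((orient (P (.inl f.1)) (P (.inr f.2)) (P (.inr e.2)) : ℤ) : ℝ)
  have hmul : (t - t') * (y - x) = 0 := by linear_combination h - h'
  rcases mul_eq_zero.1 hmul with h1 | h1
  · rw [sub_eq_zero.1 h1]
  · have hxy : y = x := sub_eq_zero.1 h1
    have hx : x = 0 := by rw [hxy] at h; linear_combination h
    rw [hxy, hx] at hoff
    simp at hoff

lemma exists_ends (e : (completeBipartiteGraph (Fin m) (Fin n)).edgeSet) :
    ∃ d : Fin m × Fin n, (e : Sym2 (Fin m ⊕ Fin n)) = s(.inl d.1, .inr d.2) := by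
  obtain ⟨e, he⟩ := e
  induction e using Sym2.ind with
  | _ a b =>
    rcases a with i | i <;> rcases b with j | j <;> simp at he
    · exact ⟨(i, j), rfl⟩
    · exact ⟨(j, i), Sym2.eq_swap⟩

theorem almostPlanar_of_points (P : Fin m ⊕ Fin n → ℤ × ℤ) (hinj : Function.Injective P)
    (hP : GeneralPosition P)
    (hcross : ∀ e f g, SignCross P e f → SignCross P e g → f = g) :
    (completeBipartiteGraph (Fin m) (Fin n)).AlmostPlanar := by
  choose d hd using exists_ends (m := m) (n := n)
  have d_inj : Function.Injective d := fun e f h => Subtype.ext (by rw [hd e, hd f, h])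
  have seg_inj : ∀ e, Function.Injective (edgeSeg P (d e)) := fun e =>
    seg_injective fun h => by simpa using hinj (toPlane_injective h)
  have start (e) : edgeSeg P (d e) 0 = toPlane (P (.inl (d e).1)) := by simp [edgeSeg, seg]
  have finish (e) : edgeSeg P (d e) 1 = toPlane (P (.inr (d e).2)) := by simp [edgeSeg, seg]
  have main : ∀ e f g p q, e ≠ f → e ≠ g →
      p ∈ edgeSeg P (d e) '' Ioo 0 1 → p ∈ edgeSeg P (d f) '' Ioo 0 1 →
      q ∈ edgeSeg P (d e) '' Ioo 0 1 → q ∈ edgeSeg P (d g) '' Ioo 0 1 → f = g := by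
    intro e f g p q hef heg hpe hpf hqe hqg
    exact d_inj (hcross _ _ _ (signCross_of_meet hP (d_inj.ne hef) hpe hpf)
      (signCross_of_meet hP (d_inj.ne heg) hqe hqg))
  refine ⟨{
    pos := fun v => toPlane (P v)
    pos_inj := toPlane_injective.comp hinj
    curve := fun e => edgeSeg P (d e)
    curve_cont := fun e => by unfold edgeSeg seg; fun_prop
    curve_inj := fun e => (seg_inj e).injOn
    curve_ends := fun e => ⟨_, _, hd e, start e, finish e⟩
    interior_no_vertex := ?_
    finite_meet := fun e f hef => (meet_subsingleton hP (d_inj.ne hef)).finite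
    no_triple_point := fun p e f g hef heg hfg he hf hg =>
      hfg (main e f g p p hef heg he hf he hg) }, ?_⟩
  · intro e t ht v hv
    have h0 := orient_seg_self (toPlane (P (.inl (d e).1))) (toPlane (P (.inr (d e).2))) t
    change orient _ _ (edgeSeg P (d e) t) = 0 at h0
    rw [hv, orient_toPlane, Int.cast_eq_zero] at h0
    by_cases h1 : .inl (d e).1 = v
    · rw [← h1, ← start e] at hv
      exact ht.1.ne' (seg_inj e hv)
    by_cases h2 : .inr (d e).2 = v
    · rw [← h2, ← finish e] at hv
      exact ht.2.ne (seg_inj e hv)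
    exact hP _ _ _ (by simp) h1 h2 h0
  · rintro e f g ⟨hef, p, hpe, hpf⟩ ⟨heg, q, hqe, hqg⟩
    exact main e f g p q hef heg hpe hpf hqe hqg

end Bipartite

/-- The vertices of the drawing of `K_{3,6}`. -/
def points : Fin 3 ⊕ Fin 6 → ℤ × ℤ :=
  Sum.elim ![(42, 46), (25, 8), (5, 66)]
    ![(2, 69), (34, 44), (54, 52), (18, 48), (27, 1), (25, 28)]

lemma points_injective : Function.Injective points := by
  unfold Function.Injective
  decide +kernel

lemma points_generalPosition : GeneralPosition points := by
  unfold GeneralPosition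
  decide +kernel

lemma points_signCross : ∀ e f g, SignCross points e f → SignCross points e g → f = g := by
  unfold SignCross
  decide +kernel

end StraightLine

open StraightLine

/-- `K_{3,6}` is almost planar, and consequently `K_{3,5}` is almost planar. -/
theorem K36_and_K35_almostPlanar :
    (completeBipartiteGraph (Fin 3) (Fin 6)).AlmostPlanar ∧
    (completeBipartiteGraph (Fin 3) (Fin 5)).AlmostPlanar := by
  refine ⟨almostPlanar_of_points points points_injective points_generalPosition points_signCross,
    ?_⟩
  -- `K_{3,5}` is drawn by forgetting the last of the six vertices.
  let ι : Fin 3 ⊕ Fin 5 → Fin 3 ⊕ Fin 6 := Sum.map id Fin.castSucc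
  have hι : Function.Injective ι :=
    Function.Injective.sumMap Function.injective_id (Fin.castSucc_injective 5)
  refine almostPlanar_of_points (points ∘ ι) (points_injective.comp hι)
    (fun a b c hab hac hbc => points_generalPosition _ _ _ (hι.ne hab) (hι.ne hac) (hι.ne hbc))
    fun e f g hf hg => ?_
  have h := points_signCross (e.1, e.2.castSucc) (f.1, f.2.castSucc) (g.1, g.2.castSucc) hf hg
  simpa [Prod.ext_iff] using h
end

section
/- The complete bipartite graph K_{4,5} is not almost planar. -/
/-!
The proof has a topological part, `K33_intersect`, and a counting part, `not_matching`.

*Topology.* In a drawing of `K_{3,3}` by continuous (not necessarily injective) curves in `ℂ` whose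
curves avoid the vertices they are not incident with, two independent edges meet. For a vertex `v`
and an edge `f` avoiding it, `logVar (f - v)` is the variation of a continuous logarithm along `f`.
If edges `e = ab` and `f = cd` are disjoint, then `f t - e s` has a continuous logarithm on the whole
square, so the variations of the logarithm along its four sides add up to zero
(`logVar_square`). Each variation equals a difference of principal logarithms up to `2πi ℤ`, and
`log z - log (-z)` is an odd multiple of `πi`. This yields one integer equation for each of
the 18 independent pairs of `K_{3,3}`; in their sum modulo 2 all unknowns cancel and an odd constant
is left.

*Rerouting.* In a 1-planar drawing of `K_{4,5}`, suppose `ab` and `a'b'` cross at `z`. Then `ab'` may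
be redrawn by following `ab` from `a` to `z` and `a'b'` from `z` to `b'`. No edge independent of `ab'`
meets the new curve. All such edges with `a < a'` are redrawn simultaneously, each along the original
curves. Because of `a < a'`, the edges `ab'` and `a'b` are never both redrawn along the same crossing,
so the independent pairs that meet in the new drawing are old crossing pairs of edges that
are not redrawn.

*Counting.* Let `p` be the number of these pairs. Averaging over subgraphs gives at least
1, 2, 4, 8 pairs in `K_{3,3}`, `K_{3,4}`, `K_{3,5}`, `K_{4,5}`, so `p ≥ 8`. On the other hand, let `p_a`
count the pairs whose endpoint of smaller index in the 4-element part is `a`, and `s_a` the redrawn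
edges at `a`. Then `p_a + s_a ≤ 5`, `p_a ≤ (3 - a) s_a` and `2 ∑ p_a + ∑ s_a ≤ 20`; these force
`∑ p_a ≤ 7`.
-/

open Set

/-! ### Variation of the logarithm along a curve -/

theorem exists_continuous_log {A : Type} [TopologicalSpace A] [SimplyConnectedSpace A]
    [LocallyPathConnectedSpace A] (a₀ : A) {g : A → ℂ} (hg : Continuous g) (h0 : ∀ x, g x ≠ 0) :
    ∃ L : A → ℂ, Continuous L ∧ ∀ x, Complex.exp (L x) = g x := by
  obtain ⟨L, ⟨-, hL⟩, -⟩ := Complex.isCoveringMapOn_exp.existsUnique_continuousMap_lifts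
    (⟨g, hg⟩ : C(A, ℂ)) (a₀ := a₀) (e₀ := Complex.log (g a₀)) (Complex.exp_log (h0 a₀))
    (fun a => h0 a)
  exact ⟨L, L.continuous, fun x => congrFun hL x⟩

open Classical in
/-- The variation over `[0, 1]` of a continuous logarithm of `g : ℝ → ℂ`; its imaginary part is
the angle swept by `g`. The value is `0` when `g` has no continuous logarithm. -/
noncomputable def logVar (g : ℝ → ℂ) : ℂ :=
  if h : ∃ L : ℝ → ℂ, Continuous L ∧ ∀ t, Complex.exp (L t) = g t then
    h.choose 1 - h.choose 0
  else 0

/-- `logVar g` may be computed from a continuous logarithm of any nonzero multiple of `g`. -/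
theorem logVar_eq {g L : ℝ → ℂ} {c : ℂ} (hc : c ≠ 0) (hL : Continuous L)
    (h : ∀ t, Complex.exp (L t) = c * g t) : logVar g = L 1 - L 0 := by
  have hex : ∃ L : ℝ → ℂ, Continuous L ∧ ∀ t, Complex.exp (L t) = g t :=
    ⟨fun t => L t - Complex.log c, by fun_prop, fun t => by
      rw [Complex.exp_sub, Complex.exp_log hc, h]; field_simp⟩
  rw [logVar, dif_pos hex]
  obtain ⟨hM, hMg⟩ := hex.choose_spec
  generalize hex.choose = M at hM hMg
  have key : (fun t => L t + (M 0 - L 0)) = M := by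
    refine Complex.isCoveringMap_exp.eq_of_comp_eq (by fun_prop) hM ?_ 0 (by ring)
    funext t
    apply Subtype.ext
    have h0 : g 0 ≠ 0 := by rw [← hMg]; exact Complex.exp_ne_zero _
    simp only [Function.comp_apply, Complex.exp_add, Complex.exp_sub, h, hMg]
    field_simp
  have h1 := congrFun key 1
  rw [← h1]; ring

theorem logVar_eq_log {g : ℝ → ℂ} (hg : Continuous g) (h0 : ∀ x, g x ≠ 0) :
    ∃ k : ℤ, logVar g = Complex.log (g 1) - Complex.log (g 0) + k * (2 * Real.pi * Complex.I) := by
  obtain ⟨L, hL, hLg⟩ := exists_continuous_log (0 : ℝ) hg h0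
  rw [logVar_eq one_ne_zero hL (by simpa using hLg)]
  have key : Complex.exp (L 1 - L 0) = Complex.exp (Complex.log (g 1) - Complex.log (g 0)) := by
    rw [Complex.exp_sub, Complex.exp_sub, Complex.exp_log (h0 _), Complex.exp_log (h0 _), hLg, hLg]
  exact Complex.exp_eq_exp_iff_exists_int.1 key

theorem log_sub_log_neg {z : ℂ} (hz : z ≠ 0) :
    ∃ n : ℤ, Complex.log z - Complex.log (-z) = (2 * n + 1) * (Real.pi * Complex.I) := by
  have key : Complex.exp (Complex.log z - Complex.log (-z)) = Complex.exp (Real.pi * Complex.I) := by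
    rw [Complex.exp_sub, Complex.exp_log hz, Complex.exp_log (neg_ne_zero.2 hz), Complex.exp_pi_mul_I]
    field_simp
  obtain ⟨n, hn⟩ := Complex.exp_eq_exp_iff_exists_int.1 key
  exact ⟨n, by rw [hn]; ring⟩

/-- For disjoint curves `γ` and `δ`, the logarithm of `δ t - γ s` is defined on the whole square, so
its variation around the boundary vanishes. -/
theorem logVar_square {γ δ : ℝ → ℂ} (hγ : Continuous γ) (hδ : Continuous δ)
    (hne : ∀ s t, γ s ≠ δ t) :
    logVar (fun t => δ t - γ 0) + logVar (fun s => γ s - δ 1) =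
      logVar (fun s => γ s - δ 0) + logVar (fun t => δ t - γ 1) := by
  obtain ⟨L, hL, hLg⟩ := exists_continuous_log ((0, 0) : ℝ × ℝ)
    (g := fun x => δ x.2 - γ x.1) (by fun_prop) (fun x => sub_ne_zero.2 (hne _ _).symm)
  rw [logVar_eq (g := fun t => δ t - γ 0) (L := fun t => L (0, t)) one_ne_zero (by fun_prop)
      (by simp [hLg]),
    logVar_eq (g := fun t => δ t - γ 1) (L := fun t => L (1, t)) one_ne_zero (by fun_prop)
      (by simp [hLg]),
    logVar_eq (g := fun s => γ s - δ 0) (L := fun s => L (s, 0)) (c := -1) (by simp) (by fun_prop)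
      (by simp [hLg]),
    logVar_eq (g := fun s => γ s - δ 1) (L := fun s => L (s, 1)) (c := -1) (by simp) (by fun_prop)
      (by simp [hLg])]
  ring

/-! ### Nonplanarity of `K_{3,3}` -/

/-- If the vertices `α i` and `β j` of `K_{3,3}` are joined by curves inside sets `T i j` that contain
no further vertices, then the sets of some two independent edges meet. -/
theorem K33_intersect (α β : Fin 3 → ℂ) (T : Fin 3 → Fin 3 → Set ℂ)
    (hT : ∀ i j, JoinedIn (T i j) (α i) (β j))
    (hTα : ∀ i i' j, i' ≠ i → α i' ∉ T i j) (hTβ : ∀ i j j', j' ≠ j → β j' ∉ T i j) :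
    ∃ i i' j j', i < i' ∧ j ≠ j' ∧ (T i j ∩ T i' j').Nonempty := by
  by_contra! hdis
  -- `γ i j` is the curve of the edge `ij`, extended to `ℝ` by constants.
  choose P hP using hT
  let γ : Fin 3 → Fin 3 → ℝ → ℂ := fun i j => (P i j).extend
  have hγc : ∀ i j, Continuous (γ i j) := fun i j => (P i j).continuous_extend
  have hγ0 : ∀ i j, γ i j 0 = α i := fun i j => (P i j).extend_zero
  have hγ1 : ∀ i j, γ i j 1 = β j := fun i j => (P i j).extend_one
  have hγT : ∀ i j t, γ i j t ∈ T i j := fun i j t => hP i j _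
  have hα : ∀ i i', i' ≠ i → α i - α i' ≠ 0 := fun i i' h => by
    rw [sub_ne_zero, ← hγ0 i 0]
    exact fun h' => hTα i i' 0 h (h' ▸ hγT i 0 0)
  have hβ : ∀ j j', j' ≠ j → β j - β j' ≠ 0 := fun j j' h => by
    rw [sub_ne_zero, ← hγ1 0 j]
    exact fun h' => hTβ 0 j j' h (h' ▸ hγT 0 j 1)
  have hαβ : ∀ i j, β j - α i ≠ 0 := fun i j => by
    obtain ⟨j', hj⟩ := exists_ne j
    rw [sub_ne_zero, ← hγ0 i j']
    exact fun h' => hTβ i j' j hj.symm (h' ▸ hγT i j' 0)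
  have hpi : (Real.pi * Complex.I : ℂ) ≠ 0 := by simp [Real.pi_ne_zero]
  -- `ka`, `kb`, `n`, `p`, `q` below record the multiples of `2πi` between the logarithm variations, or
  -- the logarithms of `z` and `-z`, and the principal values.
  have hkα : ∀ i' i j, ∃ k : ℤ, i' ≠ i → logVar (fun t => γ i j t - α i') =
      Complex.log (β j - α i') - Complex.log (α i - α i') + k * (2 * Real.pi * Complex.I) := by
    intro i' i j
    by_cases h : i' = i
    · exact ⟨0, fun h' => absurd h h'⟩
    · obtain ⟨k, hk⟩ := logVar_eq_log (g := fun t => γ i j t - α i')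
        ((hγc i j).sub continuous_const)
        (fun t => sub_ne_zero.2 fun h' => hTα i i' j h (h' ▸ hγT i j t))
      exact ⟨k, fun _ => by rw [hk, hγ0, hγ1]⟩
  have hkβ : ∀ j' i j, ∃ k : ℤ, j' ≠ j → logVar (fun t => γ i j t - β j') =
      Complex.log (β j - β j') - Complex.log (α i - β j') + k * (2 * Real.pi * Complex.I) := by
    intro j' i j
    by_cases h : j' = j
    · exact ⟨0, fun h' => absurd h h'⟩
    · obtain ⟨k, hk⟩ := logVar_eq_log (g := fun t => γ i j t - β j')
        ((hγc i j).sub continuous_const)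
        (fun t => sub_ne_zero.2 fun h' => hTβ i j j' h (h' ▸ hγT i j t))
      exact ⟨k, fun _ => by rw [hk, hγ0, hγ1]⟩
  have hn : ∀ i j, ∃ n : ℤ, Complex.log (β j - α i) - Complex.log (α i - β j) =
      (2 * n + 1) * (Real.pi * Complex.I) := fun i j => by
    simpa using log_sub_log_neg (hαβ i j)
  have hp : ∀ i i', ∃ n : ℤ, i' ≠ i → Complex.log (α i - α i') - Complex.log (α i' - α i) =
      (2 * n + 1) * (Real.pi * Complex.I) := fun i i' => by
    by_cases h : i' = i
    · exact ⟨0, fun h' => absurd h h'⟩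
    · simpa [h] using log_sub_log_neg (hα i i' h)
  have hq : ∀ j j', ∃ n : ℤ, j' ≠ j → Complex.log (β j - β j') - Complex.log (β j' - β j) =
      (2 * n + 1) * (Real.pi * Complex.I) := fun j j' => by
    by_cases h : j' = j
    · exact ⟨0, fun h' => absurd h h'⟩
    · simpa [h] using log_sub_log_neg (hβ j j' h)
  choose ka hka using hkα
  choose kb hkb using hkβ
  choose n hn using hn
  choose p hp using hp
  choose q hq using hq
  have hqq : ∀ j j', j' ≠ j → q j j' + q j' j + 1 = 0 := by
    intro j j' h
    have h1 := hq j j' h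
    have h2 := hq j' j h.symm
    have h3 : ((2 * (q j j' + q j' j + 1) : ℤ) : ℂ) * (Real.pi * Complex.I) = 0 := by
      push_cast
      linear_combination -h1 - h2
    have h4 := (mul_eq_zero.1 h3).resolve_right hpi
    have h5 : (2 * (q j j' + q j' j + 1) : ℤ) = 0 := by exact_mod_cast h4
    omega
  have key : ∀ i i' j j', i < i' → j ≠ j' →
      n i j' - n i' j + p i i' + q j j' + 1 + ka i i' j' - ka i' i j + kb j' i j - kb j i' j' = 0 := by
    intro i i' j j' hi hj
    have hsq := logVar_square (hγc i j) (hγc i' j') (fun s t h =>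
      (hdis i i' j j' hi hj).subset ⟨hγT i j s, h ▸ hγT i' j' t⟩)
    simp only [hγ0, hγ1] at hsq
    rw [hka _ _ _ hi.ne, hka _ _ _ hi.ne', hkb _ _ _ hj, hkb _ _ _ hj.symm] at hsq
    have h3 : ((2 * (n i j' - n i' j + p i i' + q j j' + 1 + ka i i' j' - ka i' i j + kb j' i j
        - kb j i' j') : ℤ) : ℂ) * (Real.pi * Complex.I) = 0 := by
      push_cast
      linear_combination hsq - hn i j' + hn i' j - hp i i' hi.ne' - hq j j' hj.symm
    have h4 := (mul_eq_zero.1 h3).resolve_right hpi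
    have h5 := Int.cast_eq_zero.1 h4
    omega
  -- Modulo 2, each of `ka`, `kb`, `n`, `p` occurs an even number of times in the 18 equations, and
  -- `q j j'` cancels against `q j' j` up to the constant of `hqq`; the constants have odd sum.
  have q01 := hqq 0 1 (by decide)
  have q02 := hqq 0 2 (by decide)
  have q12 := hqq 1 2 (by decide)
  have e (i i') (hi : i < i') := And.intro (key i i' 0 1 hi (by decide))
    (And.intro (key i i' 0 2 hi (by decide)) (And.intro (key i i' 1 2 hi (by decide))
    (And.intro (key i i' 1 0 hi (by decide)) (And.intro (key i i' 2 0 hi (by decide))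
    (key i i' 2 1 hi (by decide))))))
  have e01 := e 0 1 (by decide)
  have e02 := e 0 2 (by decide)
  have e12 := e 1 2 (by decide)
  omega

/-! ### Counting crossing pairs -/

open Finset in
/-- Each two-element set `σ c ⊆ A` survives the deletion of exactly `#A - 2` elements of `A`. -/
theorem sum_card_filter_erase {ι V : Type} [DecidableEq V] (P : Finset ι) (σ : ι → Finset V)
    (hσ : ∀ c, #(σ c) = 2) (A : Finset V) :
    ∑ v ∈ A, #{c ∈ P | σ c ⊆ A.erase v} = (#A - 2) * #{c ∈ P | σ c ⊆ A} := by
  simp only [card_filter, Finset.mul_sum]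
  rw [Finset.sum_comm]
  refine Finset.sum_congr rfl fun c _ => ?_
  by_cases h : σ c ⊆ A
  · have : ∀ v, (σ c ⊆ A.erase v ↔ v ∉ σ c) := fun v => by
      rw [Finset.subset_erase]; exact ⟨fun h => h.2, fun h' => ⟨h, h'⟩⟩
    simp only [this, h, if_true, mul_one]
    rw [← card_filter, ← hσ c, ← card_sdiff_of_subset h, Finset.sdiff_eq_filter]
  · have : ∀ v, ¬ σ c ⊆ A.erase v := fun v h' => h (h'.trans (erase_subset _ _))
    simp [this, h]

open Finset in
/-- The lower bound 8 for the number of crossing pairs of `K_{4,5}`, from the existence of a crossing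
pair in each `K_{3,3}`. Here `σ c` and `τ c` are the sets of endpoints of the pair `c` in the two
parts. -/
theorem eight_le_card {ι : Type} (P : Finset ι) (σ : ι → Finset (Fin 4)) (τ : ι → Finset (Fin 5))
    (hσ : ∀ c, #(σ c) = 2) (hτ : ∀ c, #(τ c) = 2)
    (h : ∀ A B, #A = 3 → #B = 3 → ∃ c ∈ P, σ c ⊆ A ∧ τ c ⊆ B) : 8 ≤ #P := by
  have h33 : ∀ A B, #A = 3 → #B = 3 → 1 ≤ #{c ∈ {c ∈ P | σ c ⊆ A} | τ c ⊆ B} := by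
    intro A B hA hB
    obtain ⟨c, hc, hcA, hcB⟩ := h A B hA hB
    exact Finset.card_pos.2 ⟨c, by simp [hc, hcA, hcB]⟩
  have h34 : ∀ A B, #A = 3 → #B = 4 → 2 ≤ #{c ∈ {c ∈ P | σ c ⊆ A} | τ c ⊆ B} := by
    intro A B hA hB
    have h1 := sum_card_filter_erase {c ∈ P | σ c ⊆ A} τ hτ B
    have h2 := Finset.card_nsmul_le_sum B _ 1 fun v hv =>
      h33 A (B.erase v) hA (by rw [card_erase_of_mem hv, hB])
    rw [h1, hB, smul_eq_mul] at h2
    omega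
  have h35 : ∀ A, #A = 3 → 4 ≤ #{c ∈ P | σ c ⊆ A} := by
    intro A hA
    have h1 := sum_card_filter_erase {c ∈ P | σ c ⊆ A} τ hτ univ
    have h2 := Finset.card_nsmul_le_sum univ _ 2 fun v hv =>
      h34 A (univ.erase v) hA (by rw [card_erase_of_mem hv]; rfl)
    rw [h1, smul_eq_mul] at h2
    simp only [Finset.card_univ, Fintype.card_fin, Finset.subset_univ, Finset.filter_true] at h2
    omega
  have h1 := sum_card_filter_erase P σ hσ univ
  have h2 := Finset.card_nsmul_le_sum univ _ 4 fun v hv =>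
    h35 (univ.erase v) (by rw [card_erase_of_mem hv]; rfl)
  rw [h1, smul_eq_mul] at h2
  simp only [Finset.card_univ, Fintype.card_fin, Finset.subset_univ, Finset.filter_true] at h2
  omega

/-- The edge `e = (a, b')` is a side of a crossing, in the relation `R`, of edges `(a, b)` and
`(a', b')` with `b ≠ b'` and `a < a'`. The edge `(a', b)` is a side of the same crossing but is not
made reroutable by it. -/
def Reroutable (R : Fin 4 × Fin 5 → Fin 4 × Fin 5 → Prop) (e : Fin 4 × Fin 5) : Prop :=
  ∃ b a', e.1 < a' ∧ b ≠ e.2 ∧ R (e.1, b) (a', e.2)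

open Finset in
/-- No matching `R` on the edges of `K_{4,5}` has, in every `K_{3,3}`, an independent related pair of
edges that are not reroutable. -/
theorem not_matching (R : Fin 4 × Fin 5 → Fin 4 × Fin 5 → Prop)
    (hsymm : ∀ e f, R e f → R f e) (hR : ∀ e f g, R e f → R e g → f = g)
    (h : ∀ (u : Fin 3 → Fin 4) (v : Fin 3 → Fin 5), StrictMono u → StrictMono v →
      ∃ i i' j j', i < i' ∧ j ≠ j' ∧ R (u i, v j) (u i', v j') ∧
        ¬ Reroutable R (u i, v j) ∧ ¬ Reroutable R (u i', v j')) : False := by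
  classical
  let E := Fin 4 × Fin 5
  -- `X` describes the surviving pairs, ordered by their endpoints in the 4-element part; `LE`, `UE`
  -- consist of the lower and upper edges of such pairs, and `SE` of the reroutable edges.
  let X : E × E → Prop := fun c => c.1.1 < c.2.1 ∧ c.1.2 ≠ c.2.2 ∧ R c.1 c.2 ∧
    ¬ Reroutable R c.1 ∧ ¬ Reroutable R c.2
  let P : Finset {c : E × E // X c} := univ
  have h8 : 8 ≤ #P := by
    refine eight_le_card P (fun c => {c.1.1.1, c.1.2.1}) (fun c => {c.1.1.2, c.1.2.2})
      (fun c => card_pair c.2.1.ne) (fun c => card_pair c.2.2.1) ?_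
    intro A B hA hB
    obtain ⟨i, i', j, j', hi, hj, hX, h1, h2⟩ := h (A.orderEmbOfFin hA) (B.orderEmbOfFin hB)
      (A.orderEmbOfFin hA).strictMono (B.orderEmbOfFin hB).strictMono
    refine ⟨⟨((A.orderEmbOfFin hA i, B.orderEmbOfFin hB j),
      (A.orderEmbOfFin hA i', B.orderEmbOfFin hB j')),
      (A.orderEmbOfFin hA).strictMono hi, fun h' => hj ((B.orderEmbOfFin hB).injective h'), hX, h1,
      h2⟩, mem_univ _, ?_, ?_⟩
    · simp [Finset.insert_subset_iff]
    · simp [Finset.insert_subset_iff]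
  let LE : Finset E := {e | ∃ f, X (e, f)}
  let UE : Finset E := {f | ∃ e, X (e, f)}
  let SE : Finset E := {e | Reroutable R e}
  have hPL : #P ≤ #LE := by
    refine card_le_card_of_injOn (fun c => c.1.1) (fun c _ => ?_) ?_
    · exact mem_coe.2 (mem_filter.2 ⟨Finset.mem_univ _, c.1.2, c.2⟩)
    · rintro ⟨⟨e, f⟩, hc⟩ - ⟨⟨e', f'⟩, hc'⟩ - hee
      obtain rfl : e = e' := hee
      obtain rfl := hR e f f' hc.2.2.1 hc'.2.2.1
      rfl
  have hPU : #P ≤ #UE := by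
    refine card_le_card_of_injOn (fun c => c.1.2) (fun c _ => ?_) ?_
    · exact mem_coe.2 (mem_filter.2 ⟨Finset.mem_univ _, c.1.1, c.2⟩)
    · rintro ⟨⟨e, f⟩, hc⟩ - ⟨⟨e', f'⟩, hc'⟩ - hee
      obtain rfl : f = f' := hee
      obtain rfl := hR f e e' (hsymm _ _ hc.2.2.1) (hsymm _ _ hc'.2.2.1)
      rfl
  have hLU : Disjoint LE UE := by
    rw [Finset.disjoint_left]
    intro e h1 h2
    obtain ⟨f, hf⟩ : ∃ f, X (e, f) := by simpa [LE] using h1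
    obtain ⟨g, hg⟩ : ∃ g, X (g, e) := by simpa [UE] using h2
    obtain rfl := hR e f g hf.2.2.1 (hsymm _ _ hg.2.2.1)
    exact lt_asymm hf.1 hg.1
  have hLS : Disjoint LE SE := by
    rw [Finset.disjoint_left]
    intro e h1 h2
    obtain ⟨f, hf⟩ : ∃ f, X (e, f) := by simpa [LE] using h1
    exact hf.2.2.2.1 (by simpa [SE] using h2)
  have hUS : Disjoint UE SE := by
    rw [Finset.disjoint_left]
    intro e h1 h2
    obtain ⟨f, hf⟩ : ∃ f, X (f, e) := by simpa [UE] using h1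
    exact hf.2.2.2.2 (by simpa [SE] using h2)
  have htot : #LE + #UE + #SE ≤ 20 := by
    rw [← card_union_of_disjoint hLU, ← card_union_of_disjoint (disjoint_union_left.2 ⟨hLS, hUS⟩)]
    exact (card_le_univ _).trans (by simp [E])
  have hrow : ∀ a : Fin 4, #{e ∈ LE | e.1 = a} + #{e ∈ SE | e.1 = a} ≤ 5 := by
    intro a
    rw [← card_union_of_disjoint (disjoint_filter_filter hLS)]
    calc _ ≤ #(univ : Finset (Fin 5)) := by
          refine card_le_card_of_injOn Prod.snd (fun _ _ => mem_coe.2 (mem_univ _)) ?_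
          intro e he f hf hef
          have h1 : e.1 = a := by
            rcases mem_union.1 (mem_coe.1 he) with h | h <;> exact (mem_filter.1 h).2
          have h2 : f.1 = a := by
            rcases mem_union.1 (mem_coe.1 hf) with h | h <;> exact (mem_filter.1 h).2
          exact Prod.ext (h1.trans h2.symm) hef
      _ = 5 := by simp
  -- An edge `(a, b)` of a surviving pair with `(a', b')`, `a < a'`, is determined by `a'` and the
  -- reroutable edge `(a, b')`.
  have hmul : ∀ a : Fin 4, #{e ∈ LE | e.1 = a} ≤ #(Finset.Ioi a) * #{e ∈ SE | e.1 = a} := by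
    intro a
    rw [← card_product]
    refine card_le_card_of_forall_subsingleton
      (fun e f => R e (f.1, f.2.2)) ?_ ?_
    · intro e he
      obtain ⟨he, rfl⟩ := mem_filter.1 he
      obtain ⟨f, hf⟩ : ∃ f, X (e, f) := by simpa [LE] using he
      refine ⟨(f.1, (e.1, f.2)), ?_, hf.2.2.1⟩
      simp only [mem_product, Finset.mem_Ioi, mem_filter, SE, Finset.mem_univ, true_and, and_true]
      exact ⟨hf.1, e.2, f.1, hf.1, hf.2.1, hf.2.2.1⟩
    · intro f _ e he e' he'
      exact hR _ _ _ (hsymm _ _ he.2) (hsymm _ _ he'.2)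
  have hL : #LE = ∑ a : Fin 4, #{e ∈ LE | e.1 = a} :=
    card_eq_sum_card_fiberwise fun _ _ => mem_coe.2 (mem_univ _)
  have hS : #SE = ∑ a : Fin 4, #{e ∈ SE | e.1 = a} :=
    card_eq_sum_card_fiberwise fun _ _ => mem_coe.2 (mem_univ _)
  rw [Fin.sum_univ_four] at hL hS
  have r0 := hrow 0
  have r1 := hrow 1
  have r2 := hrow 2
  have m0 := hmul 0
  have m1 := hmul 1
  have m2 := hmul 2
  have m3 := hmul 3
  rw [show #(Finset.Ioi (0 : Fin 4)) = 3 by decide] at m0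
  rw [show #(Finset.Ioi (1 : Fin 4)) = 2 by decide] at m1
  rw [show #(Finset.Ioi (2 : Fin 4)) = 1 by decide] at m2
  rw [show #(Finset.Ioi (3 : Fin 4)) = 0 by decide] at m3
  omega

/-! ### Rerouting, and the theorem -/

/-- The rerouting argument. The set `C e` stands for the interior of the curve of the edge `e`; `hpj`
and `hqj` say that its points can be joined inside it to the two endpoints of `e`. -/
theorem no_crossing_matching (p : Fin 4 → ℂ) (q : Fin 5 → ℂ) (C : Fin 4 × Fin 5 → Set ℂ)
    (hp : Function.Injective p) (hq : Function.Injective q) (hpq : ∀ a b, p a ≠ q b)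
    (hpC : ∀ a e, p a ∉ C e) (hqC : ∀ b e, q b ∉ C e) (hne : ∀ e, (C e).Nonempty)
    (hpj : ∀ e, ∀ z ∈ C e, JoinedIn (insert (p e.1) (C e)) (p e.1) z)
    (hqj : ∀ e, ∀ z ∈ C e, JoinedIn (insert (q e.2) (C e)) z (q e.2))
    (hm : ∀ e f g, e ≠ f → e ≠ g → (C e ∩ C f).Nonempty → (C e ∩ C g).Nonempty → f = g) :
    False := by
  classical
  let R : Fin 4 × Fin 5 → Fin 4 × Fin 5 → Prop := fun e f =>
    e.1 ≠ f.1 ∧ e.2 ≠ f.2 ∧ (C e ∩ C f).Nonempty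
  have hRne : ∀ e f, R e f → e ≠ f := fun e f h h' => h.1 (h' ▸ rfl)
  have hsymm : ∀ e f, R e f → R f e := fun e f h => ⟨h.1.symm, h.2.1.symm, by
    rw [inter_comm]; exact h.2.2⟩
  have hR : ∀ e f g, R e f → R e g → f = g := fun e f g h h' =>
    hm e f g (hRne _ _ h) (hRne _ _ h') h.2.2 h'.2.2
  have hpair : ∀ e f g, R e f → (C e ∩ C g).Nonempty → g = e ∨ g = f := by
    intro e f g h hg
    by_cases h' : e = g
    · exact Or.inl h'.symm
    · exact Or.inr (hm e f g (hRne _ _ h) h' h.2.2 hg).symm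
  -- The new curve of `e` runs along `C e₁` and then along `C e₂`; both are `C e` if `e` is not
  -- reroutable.
  have hG : ∀ e, ∃ e₁ e₂ : Fin 4 × Fin 5, e₁.1 = e.1 ∧ e₂.2 = e.2 ∧ (C e₁ ∩ C e₂).Nonempty ∧
      ((Reroutable R e ∧ e.1 < e₂.1 ∧ R e₁ e₂) ∨ (¬ Reroutable R e ∧ e₁ = e ∧ e₂ = e)) := by
    intro e
    by_cases h : Reroutable R e
    · obtain ⟨b, a', h1, h2, h3⟩ := h
      exact ⟨(e.1, b), (a', e.2), rfl, rfl, h3.2.2, Or.inl ⟨⟨b, a', h1, h2, h3⟩, h1, h3⟩⟩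
    · exact ⟨e, e, rfl, rfl, by simpa using hne e, Or.inr ⟨h, rfl, rfl⟩⟩
  choose G₁ G₂ hG1 hG2 hGne hG using hG
  let T : Fin 4 × Fin 5 → Set ℂ := fun e => {p e.1, q e.2} ∪ (C (G₁ e) ∪ C (G₂ e))
  have hT : ∀ e, JoinedIn (T e) (p e.1) (q e.2) := by
    intro e
    obtain ⟨z, hz1, hz2⟩ := hGne e
    have h1 := hpj _ z hz1
    have h2 := hqj _ z hz2
    rw [hG1] at h1
    rw [hG2] at h2
    refine (h1.mono ?_).trans (h2.mono ?_)
    · rintro x (rfl | hx)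
      · exact Or.inl (Or.inl rfl)
      · exact Or.inr (Or.inl hx)
    · rintro x (rfl | hx)
      · exact Or.inl (Or.inr rfl)
      · exact Or.inr (Or.inr hx)
  have hTp : ∀ e a, a ≠ e.1 → p a ∉ T e := by
    rintro e a h ((h' | h') | (h' | h'))
    · exact h (hp h')
    · exact hpq _ _ h'
    · exact hpC _ _ h'
    · exact hpC _ _ h'
  have hTq : ∀ e b, b ≠ e.2 → q b ∉ T e := by
    rintro e b h ((h' | h') | (h' | h'))
    · exact hpq _ _ h'.symm
    · exact h (hq h')
    · exact hqC _ _ h'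
    · exact hqC _ _ h'
  have hmeet : ∀ e f, e.1 ≠ f.1 → e.2 ≠ f.2 → (T e ∩ T f).Nonempty →
      R e f ∧ ¬ Reroutable R e ∧ ¬ Reroutable R f := by
    rintro e f h1 h2 ⟨z, hze, hzf⟩
    have hzC : ∃ g h, (g = G₁ e ∨ g = G₂ e) ∧ (h = G₁ f ∨ h = G₂ f) ∧ (C g ∩ C h).Nonempty := by
      rcases hze with (rfl | rfl) | hze
      · exact absurd hzf (hTp f _ h1)
      · exact absurd hzf (hTq f _ h2)
      rcases hzf with (rfl | rfl) | hzf
      · exact absurd (Or.inr hze) (hTp e _ h1.symm)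
      · exact absurd (Or.inr hze) (hTq e _ h2.symm)
      rcases hze with hze | hze <;> rcases hzf with hzf | hzf
      · exact ⟨_, _, Or.inl rfl, Or.inl rfl, z, hze, hzf⟩
      · exact ⟨_, _, Or.inl rfl, Or.inr rfl, z, hze, hzf⟩
      · exact ⟨_, _, Or.inr rfl, Or.inl rfl, z, hze, hzf⟩
      · exact ⟨_, _, Or.inr rfl, Or.inr rfl, z, hze, hzf⟩
    obtain ⟨g, h, hg, hh, hgh⟩ := hzC
    have e1 := hG1 e
    have e2 := hG2 e
    have f1 := hG1 f
    have f2 := hG2 f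
    rcases hG e with ⟨-, hlt, hRe⟩ | ⟨hSe, he1, he2⟩
    · -- The new curve of `f` uses one of the two crossing curves along which `e` is rerouted.
      have hh' : h = G₁ e ∨ h = G₂ e := by
        rcases hg with rfl | rfl
        · exact hpair _ _ _ hRe hgh
        · exact (hpair _ _ _ (hsymm _ _ hRe) hgh).symm
      exfalso
      rcases hG f with ⟨-, hlt', hRf⟩ | ⟨hSf, hf1, hf2⟩
      · rcases hh with rfl | rfl <;> rcases hh' with hh' | hh'
        · rw [hh', e1] at f1
          exact h1 f1
        -- Both edges are rerouted along the same crossing, as its two opposite sides; the order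
        -- condition in `Reroutable` excludes this.
        · have := hR _ _ _ hRf (hh' ▸ hsymm _ _ hRe)
          rw [hh'] at f1
          rw [this] at hlt'
          rw [f1] at hlt
          rw [e1] at hlt'
          exact lt_asymm hlt hlt'
        · have := hR _ _ _ (hsymm _ _ hRf) (hh' ▸ hRe)
          rw [hh', e1] at hlt'
          rw [← this, f1] at hlt
          exact lt_asymm hlt hlt'
        · exact h2 (by rw [← e2, ← f2, hh'])
      · have hhf : h = f := by rcases hh with rfl | rfl <;> assumption
        rcases hh' with hh' | hh'
        · exact h1 (by rw [← e1, ← hhf, hh'])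
        · exact h2 (by rw [← e2, ← hhf, hh'])
    · have hge : g = e := by rcases hg with rfl | rfl <;> assumption
      subst hge
      rcases hG f with ⟨-, hlt', hRf⟩ | ⟨hSf, hf1, hf2⟩
      · exfalso
        rw [inter_comm] at hgh
        have hg' : g = G₁ f ∨ g = G₂ f := by
          rcases hh with rfl | rfl
          · exact hpair _ _ _ hRf hgh
          · exact (hpair _ _ _ (hsymm _ _ hRf) hgh).symm
        rcases hg' with hg' | hg'
        · exact h1 (by rw [← f1, ← hg'])
        · exact h2 (by rw [← f2, ← hg'])
      · have hhf : h = f := by rcases hh with rfl | rfl <;> assumption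
        subst hhf
        exact ⟨⟨h1, h2, hgh⟩, hSe, hSf⟩
  refine not_matching R hsymm hR fun u v hu hv => ?_
  obtain ⟨i, i', j, j', hi, hj, hne'⟩ := K33_intersect (p ∘ u) (q ∘ v) (fun i j => T (u i, v j))
    (fun i j => hT _) (fun i i' j h => hTp _ _ (fun h' => h (hu.injective h')))
    (fun i j j' h => hTq _ _ (fun h' => h (hv.injective h')))
  exact ⟨i, i', j, j', hi, hj, hmeet _ _ (fun h' => hi.ne (hu.injective h'))
    (fun h' => hj (hv.injective h')) hne'⟩

theorem joinedIn_curve {c : ℝ → ℝ × ℝ} (hc : ContinuousOn c (Icc 0 1)) {z : ℝ × ℝ}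
    (hz : z ∈ c '' Ioo 0 1) :
    JoinedIn (insert (c 0) (c '' Ioo 0 1)) (c 0) z ∧
      JoinedIn (insert (c 1) (c '' Ioo 0 1)) (c 1) z := by
  obtain ⟨t, ht, rfl⟩ := hz
  constructor
  · have hs : Icc 0 t ⊆ Icc (0 : ℝ) 1 := Icc_subset_Icc_right ht.2.le
    have h := ((convex_Icc 0 t).isPathConnected ⟨0, left_mem_Icc.2 ht.1.le⟩).image' (hc.mono hs)
    refine (h.joinedIn _ (mem_image_of_mem c (left_mem_Icc.2 ht.1.le)) _
      (mem_image_of_mem c (right_mem_Icc.2 ht.1.le))).mono ?_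
    rintro _ ⟨s, hs, rfl⟩
    rcases hs.1.eq_or_lt with rfl | h0
    · exact mem_insert _ _
    · exact mem_insert_of_mem _ ⟨s, ⟨h0, hs.2.trans_lt ht.2⟩, rfl⟩
  · have hs : Icc t 1 ⊆ Icc (0 : ℝ) 1 := Icc_subset_Icc_left ht.1.le
    have h := ((convex_Icc t 1).isPathConnected ⟨1, right_mem_Icc.2 ht.2.le⟩).image' (hc.mono hs)
    refine (h.joinedIn _ (mem_image_of_mem c (right_mem_Icc.2 ht.2.le)) _
      (mem_image_of_mem c (left_mem_Icc.2 ht.2.le))).mono ?_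
    rintro _ ⟨s, hs, rfl⟩
    rcases hs.2.eq_or_lt with rfl | h0
    · exact mem_insert _ _
    · exact mem_insert_of_mem _ ⟨s, ⟨ht.1.trans_le hs.1, h0⟩, rfl⟩

/-- The complete bipartite graph `K_{4,5}` is not almost planar. -/
theorem K45_not_almostPlanar :
    ¬ (completeBipartiteGraph (Fin 4) (Fin 5)).AlmostPlanar := by
  rintro ⟨D, hD⟩
  let ε : Fin 4 × Fin 5 → (completeBipartiteGraph (Fin 4) (Fin 5)).edgeSet := fun e =>
    ⟨s(Sum.inl e.1, Sum.inr e.2), by simp⟩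
  have hε : Function.Injective ε := by
    intro e f h
    have hval : s(Sum.inl e.1, Sum.inr e.2) = (s(Sum.inl f.1, Sum.inr f.2) : Sym2 (Fin 4 ⊕ Fin 5)) :=
      congrArg Subtype.val h
    simpa [Prod.ext_iff] using hval
  -- The identification of `ℝ × ℝ` with `ℂ`.
  let Φ : ℝ × ℝ → ℂ := Complex.equivRealProdCLM.symm
  have hΦc : Continuous Φ := Complex.equivRealProdCLM.symm.continuous
  have hΦ : Function.Injective Φ := Complex.equivRealProdCLM.symm.injective
  let I : Fin 4 × Fin 5 → Set (ℝ × ℝ) := fun e => D.curve (ε e) '' Ioo 0 1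
  have hends : ∀ e z, z ∈ I e →
      JoinedIn (insert (D.pos (Sum.inl e.1)) (I e)) (D.pos (Sum.inl e.1)) z ∧
      JoinedIn (insert (D.pos (Sum.inr e.2)) (I e)) (D.pos (Sum.inr e.2)) z := by
    intro e z hz
    have h := joinedIn_curve (D.curve_cont (ε e)) hz
    obtain ⟨x, y, hxy, h0, h1⟩ := D.curve_ends (ε e)
    rw [h0, h1] at h
    rcases Sym2.eq_iff.1 hxy with ⟨rfl, rfl⟩ | ⟨rfl, rfl⟩
    · exact h
    · exact h.symm
  have hpos : ∀ v e, Φ (D.pos v) ∉ Φ '' I e := by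
    rintro v e h
    obtain ⟨t, ht, htv⟩ := (hΦ.mem_set_image).1 h
    exact D.interior_no_vertex _ t ht v htv
  have hmap : ∀ {x y z : ℝ × ℝ} {s : Set (ℝ × ℝ)}, JoinedIn (insert x s) y z →
      JoinedIn (insert (Φ x) (Φ '' s)) (Φ y) (Φ z) := fun h => by
    rw [← image_insert_eq]; exact h.map hΦc
  have hcross : ∀ e f, e ≠ f → (Φ '' I e ∩ Φ '' I f).Nonempty → D.Crosses (ε e) (ε f) := by
    intro e f hef h
    rw [← image_inter hΦ, image_nonempty] at h
    obtain ⟨x, hx⟩ := h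
    exact ⟨fun h' => hef (hε h'), x, hx⟩
  refine no_crossing_matching (fun a => Φ (D.pos (Sum.inl a))) (fun b => Φ (D.pos (Sum.inr b)))
    (fun e => Φ '' I e) (fun a b h => Sum.inl_injective (D.pos_inj (hΦ h)))
    (fun a b h => Sum.inr_injective (D.pos_inj (hΦ h)))
    (fun a b h => Sum.inl_ne_inr (D.pos_inj (hΦ h))) (fun a => hpos _) (fun b => hpos _) ?_ ?_ ?_ ?_
  · exact fun e => ((nonempty_Ioo.2 one_pos).image _).image _
  · rintro e _ ⟨z, hz, rfl⟩
    exact hmap (hends e z hz).1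
  · rintro e _ ⟨z, hz, rfl⟩
    exact (hmap (hends e z hz).2).symm
  · exact fun e f g hf hg h h' => hε (hD _ _ _ (hcross e f hf h) (hcross e g hg h'))
end
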